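/- For every real number c with √2 ≤ c ≤ √((1+√17)/2), there exists a normal form alternation-trading proof for c with exactly 8 lines, whose annotation is [1,1,0,0,1,0,0]. (This is the syntactic content of the n^{1.6004} lower bound; note √((1+√17)/2) ≈ 1.60048.) -/

import Mathlib

/-- A quantifier block `(Q n^a)^b`: a quantifier label `Q` (`true` = ∃, `false` = ∀),
the guess exponent `a`, and the input exponent `b` written to its right
(so the block for `Q_i` carries `b_{i+1}`). -/
structure Block where
  Q : Bool
  a : ℝ
  b : ℝ

/-- A line `(Q_1 n^{a_1})^{b_2} (Q_2 n^{a_2})^{b_3} ⋯ (Q_k n^{a_k})^{b_{k+1}} DTS[n^{a_{k+1}}]`.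
The quantifier blocks are listed *innermost first*, i.e.
`blocks = [(Q_k, a_k, b_{k+1}), …, (Q_1, a_1, b_2)]`, and `dts = a_{k+1}`. -/
structure Line where
  blocks : List Block
  dts : ℝ

/-- Well-formedness of a line: `a_{k+1} ≥ 1`, all `a_i ≥ 0`, all `b_i ≥ 1`, and
adjacent quantifiers alternate (`Q_i ≠ Q_{i+1}`). -/
def Line.WF (L : Line) : Prop :=
  1 ≤ L.dts ∧ (∀ B ∈ L.blocks, 0 ≤ B.a ∧ 1 ≤ B.b) ∧
    L.blocks.Chain' (fun B B' => B.Q ≠ B'.Q)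

/-- Reading off `b_k` from the list of blocks outside block `k`:
by convention `b_1 = 1` when no blocks remain. -/
def prevB : List Block → ℝ
  | [] => 1
  | B :: _ => B.b

/-- Speedup Rule 0: from `DTS[n^{a₁}]` (k = 0), for any `0 < x < a₁` and `Q₀`,
derive `(Q₀ n^x)^{max(x,1)} (Q₁ n^0)^1 DTS[n^{max(a₁ - x, 1)}]` with `Q₁ ≠ Q₀`. -/
inductive Speedup0 : Line → Line → Prop
  | intro (a₁ x : ℝ) (Q : Bool) (h0 : 0 < x) (h1 : x < a₁) :
      Speedup0 ⟨[], a₁⟩ ⟨[⟨!Q, 0, 1⟩, ⟨Q, x, max x 1⟩], max (a₁ - x) 1⟩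

/-- Speedup Rule 1: from `⋯ (Q_k n^{a_k})^{b_{k+1}} DTS[n^{a_{k+1}}]` (k > 0), for any
`0 < x < a_{k+1}`, derive
`⋯ (Q_k n^{max(a_k,x)})^{max(x,b_{k+1})} (Q_{k+1} n^0)^{b_{k+1}} DTS[n^{max(a_{k+1} - x, 1)}]`
with `Q_{k+1} ≠ Q_k`. -/
inductive Speedup1 : Line → Line → Prop
  | intro (Qk : Bool) (ak bk1 a x : ℝ) (rest : List Block) (h0 : 0 < x) (h1 : x < a) :
      Speedup1 ⟨⟨Qk, ak, bk1⟩ :: rest, a⟩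
        ⟨⟨!Qk, 0, bk1⟩ :: ⟨Qk, max ak x, max x bk1⟩ :: rest, max (a - x) 1⟩

/-- Speedup Rule 2: from `⋯ (Q_k n^{a_k})^{b_{k+1}} DTS[n^{a_{k+1}}]` (k > 0), for any
`0 < x < a_{k+1}`, derive
`⋯ (Q_k n^{a_k})^{b_{k+1}} (Q_{k+1} n^x)^{max(x,b_{k+1})} (Q_{k+2} n^0)^{b_{k+1}}
DTS[n^{max(a_{k+1} - x, 1)}]` with `Q_{k+1} ≠ Q_k`, `Q_{k+2} ≠ Q_{k+1}`. -/
inductive Speedup2 : Line → Line → Prop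
  | intro (Qk : Bool) (ak bk1 a x : ℝ) (rest : List Block) (h0 : 0 < x) (h1 : x < a) :
      Speedup2 ⟨⟨Qk, ak, bk1⟩ :: rest, a⟩
        ⟨⟨Qk, 0, bk1⟩ :: ⟨!Qk, x, max x bk1⟩ :: ⟨Qk, ak, bk1⟩ :: rest, max (a - x) 1⟩

/-- A speedup step: an application of Speedup Rule 0, 1 or 2. -/
def SpeedupStep (L L' : Line) : Prop := Speedup0 L L' ∨ Speedup1 L L' ∨ Speedup2 L L'

/-- Slowdown Rule: from `⋯ (Q_{k-1} n^{a_{k-1}})^{b_k} (Q_k n^{a_k})^{b_{k+1}} DTS[n^{a_{k+1}}]`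
(k > 0) derive `⋯ (Q_{k-1} n^{a_{k-1}})^{b_k} DTS[n^{c · max(a_{k+1}, a_k, b_k, b_{k+1})}]`,
with the convention `b_1 = 1`. -/
inductive Slowdown (c : ℝ) : Line → Line → Prop
  | intro (Qk : Bool) (ak bk1 a : ℝ) (rest : List Block) :
      Slowdown c ⟨⟨Qk, ak, bk1⟩ :: rest, a⟩
        ⟨rest, c * max (max a ak) (max (prevB rest) bk1)⟩

/-- A step of an alternation-trading proof for `c`. -/
def Step (c : ℝ) (L L' : Line) : Prop := SpeedupStep L L' ∨ Slowdown c L L'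

/-- An alternation-trading proof for `c`: a nonempty list of well-formed lines in which
each line after the first follows from the previous one by a Speedup or Slowdown Rule. -/
def IsATProof (c : ℝ) (P : List Line) : Prop :=
  P ≠ [] ∧ (∀ L ∈ P, L.WF) ∧ P.Chain' (Step c)

/-- Normal form: the first line is `DTS[n^a]`, the last line is `DTS[n^{a'}]` with `a ≥ a'`,
and no intermediate line is a `DTS` class (i.e. has `k = 0`). -/
def IsNormalForm (P : List Line) : Prop :=
  (∃ a a' : ℝ, a' ≤ a ∧ P.head? = some ⟨[], a⟩ ∧ P.getLast? = some ⟨[], a'⟩) ∧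
    ∀ i L, 0 < i → i + 1 < P.length → P[i]? = some L → L.blocks ≠ []

/-- `A` is the annotation of the proof `P`: `A` has one bit per step of `P`
(bit `A[i]` governs the step from line `i` to line `i+1`, 0-indexed), a `true` bit
marks a Speedup Rule application and a `false` bit a Slowdown Rule application. -/
def HasAnnotation (c : ℝ) (P : List Line) (A : List Bool) : Prop :=
  A.length + 1 = P.length ∧
    ∀ i L L', P[i]? = some L → P[i + 1]? = some L' →
      (A[i]? = some true → SpeedupStep L L') ∧ (A[i]? = some false → Slowdown c L L')

/-!
The guesses are chosen so that at each slowdown the `DTS` exponent dominates the other exponents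
involved and is just multiplied by `c`. With `x = max (c² / 2) 1` the proof is

  `DTS[n^{x+2}]`,  `(∃ n^x)^x (∀ n^0)^1 DTS[n^2]`,  `(∃ n^x)^x (∀ n^1)^1 (∃ n^0)^1 DTS[n^1]`,
  `(∃ n^x)^x (∀ n^1)^1 DTS[n^c]`,  `(∃ n^x)^x DTS[n^{c²}]`,  `(∃ n^x)^x (∀ n^0)^x DTS[n^x]`,
  `(∃ n^x)^x DTS[n^{cx}]`,  `DTS[n^{c²x}]`.

The fifth line needs `x ≤ c`. The last exponent does not exceed the first when
`c² x ≤ x + 2`. If `x = c² / 2`, the latter says `c⁴ ≤ c² + 4`, and the positive root of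
`t² = t + 4` is `t = (1 + √17) / 2`; if `x = 1`, it only says `c² ≤ 3`.
-/

theorem Line.wf_iff_isChain {L : Line} :
    L.WF ↔ 1 ≤ L.dts ∧ (∀ B ∈ L.blocks, 0 ≤ B.a ∧ 1 ≤ B.b) ∧
      L.blocks.IsChain (fun B B' ↦ B.Q ≠ B'.Q) :=
  Iff.rfl

theorem Line.wf_nil {d : ℝ} : Line.WF ⟨[], d⟩ ↔ 1 ≤ d := by
  simp [Line.wf_iff_isChain]

theorem Speedup0.wf {L L' : Line} (h : Speedup0 L L') : L'.WF := by
  obtain ⟨a₁, x, Q, hx, -⟩ := h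
  simp [Line.wf_iff_isChain, hx.le]

theorem Speedup1.wf {L L' : Line} (h : Speedup1 L L') (hL : L.WF) : L'.WF := by
  obtain ⟨Q, a, b, d, x, rest, hx, -⟩ := h
  obtain ⟨-, hexp, halt⟩ := Line.wf_iff_isChain.1 hL
  obtain ⟨⟨-, hb⟩, hrest⟩ := List.forall_mem_cons.1 hexp
  refine Line.wf_iff_isChain.2 ⟨le_max_right _ _, ?_, ?_⟩
  · simpa [hb, hx.le] using hrest
  · cases rest with
    | nil => simp
    | cons B rest => simpa using halt

theorem Speedup2.wf {L L' : Line} (h : Speedup2 L L') (hL : L.WF) : L'.WF := by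
  obtain ⟨Q, a, b, d, x, rest, hx, -⟩ := h
  obtain ⟨-, hexp, halt⟩ := Line.wf_iff_isChain.1 hL
  have hb : 1 ≤ b := (hexp _ List.mem_cons_self).2
  refine Line.wf_iff_isChain.2 ⟨le_max_right _ _, ?_, by simpa using halt⟩
  simpa [hb, hx.le] using hexp

theorem SpeedupStep.wf {L L' : Line} (h : SpeedupStep L L') (hL : L.WF) : L'.WF :=
  h.elim Speedup0.wf fun h ↦ h.elim (·.wf hL) (·.wf hL)

theorem Slowdown.wf {c : ℝ} (hc : 1 ≤ c) {L L' : Line} (h : Slowdown c L L') (hL : L.WF) :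
    L'.WF := by
  obtain ⟨Q, a, b, d, rest⟩ := h
  obtain ⟨hd, hexp, halt⟩ := hL
  have hmax : 1 ≤ max (max d a) (max (prevB rest) b) := hd.trans (by simp)
  exact ⟨one_le_mul_of_one_le_of_one_le hc hmax, (List.forall_mem_cons.1 hexp).2, halt.tail⟩

theorem Step.wf {c : ℝ} (hc : 1 ≤ c) {L L' : Line} (h : Step c L L') (hL : L.WF) : L'.WF :=
  h.elim (·.wf hL) (·.wf hc hL)

/-- The step from `L` to `L'` that a single bit of an annotation prescribes. -/
def AnnotatedStep (c : ℝ) : Bool → Line → Line → Prop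
  | true => SpeedupStep
  | false => Slowdown c

theorem AnnotatedStep.step {c : ℝ} {bit : Bool} {L L' : Line} (h : AnnotatedStep c bit L L') :
    Step c L L' := by
  cases bit with
  | true => exact .inl h
  | false => exact .inr h

namespace HasAnnotation

theorem singleton (c : ℝ) (L : Line) : HasAnnotation c [L] [] := by
  simp [HasAnnotation]

theorem cons_cons_iff {c : ℝ} {L L' : Line} {P : List Line} {bit : Bool} {A : List Bool} :
    HasAnnotation c (L :: L' :: P) (bit :: A) ↔
      AnnotatedStep c bit L L' ∧ HasAnnotation c (L' :: P) A := by
  have hbit : AnnotatedStep c bit L L' ↔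
      (bit = true → SpeedupStep L L') ∧ (bit = false → Slowdown c L L') := by
    cases bit <;> simp [AnnotatedStep]
  constructor
  · rintro ⟨hlen, hstep⟩
    refine ⟨hbit.2 ?_, by simpa using hlen, fun i ↦ ?_⟩
    · simpa using hstep 0 L L'
    · simpa using hstep (i + 1)
  · rintro ⟨h, hlen, hstep⟩
    refine ⟨by simpa using hlen, fun i ↦ ?_⟩
    cases i with
    | zero => simpa using hbit.1 h
    | succ i => simpa using hstep i

theorem isATProof {c : ℝ} (hc : 1 ≤ c) {L : Line} (hL : L.WF) {P : List Line} {A : List Bool}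
    (h : HasAnnotation c (L :: P) A) : IsATProof c (L :: P) := by
  induction P generalizing L A with
  | nil => exact ⟨List.cons_ne_nil _ _, by simpa using hL, List.isChain_singleton _⟩
  | cons L' P ih =>
    obtain - | ⟨bit, A⟩ := A
    · simp [HasAnnotation] at h
    obtain ⟨hbit, htail⟩ := cons_cons_iff.1 h
    obtain ⟨-, hwf, hchain⟩ := ih (hbit.step.wf hc hL) htail
    exact ⟨List.cons_ne_nil _ _, List.forall_mem_cons.2 ⟨hL, hwf⟩,
      List.isChain_cons_cons.2 ⟨hbit.step, hchain⟩⟩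

end HasAnnotation

theorem isNormalForm_cons_append {a a' : ℝ} (h : a' ≤ a) {P : List Line}
    (hP : ∀ L ∈ P, L.blocks ≠ []) : IsNormalForm (⟨[], a⟩ :: (P ++ [⟨[], a'⟩])) := by
  refine ⟨⟨a, a', h, rfl, by simp [List.getLast?_cons]⟩, fun i L hi hlen hL ↦ hP L ?_⟩
  obtain ⟨i, rfl⟩ := Nat.exists_eq_add_of_lt hi
  have hi : i < P.length := by simpa using hlen
  rw [zero_add, List.getElem?_cons_succ, List.getElem?_append_left hi] at hL
  exact List.mem_of_getElem? hL

theorem Slowdown.of_le_dts (c : ℝ) {Q : Bool} {a b d : ℝ} {rest : List Block} (ha : a ≤ d)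
    (hb : b ≤ d) (hrest : prevB rest ≤ d) : Slowdown c ⟨⟨Q, a, b⟩ :: rest, d⟩ ⟨rest, c * d⟩ := by
  simpa [ha, hb, hrest] using Slowdown.intro (c := c) Q a b d rest

theorem Speedup0.of_one_le (Q : Bool) {a x : ℝ} (hx : 1 ≤ x) (hxa : 1 ≤ a - x) :
    Speedup0 ⟨[], a⟩ ⟨[⟨!Q, 0, 1⟩, ⟨Q, x, x⟩], a - x⟩ := by
  simpa [hx, hxa] using Speedup0.intro a x Q (by linarith) (by linarith)

theorem Speedup1.half (Q : Bool) (a b : ℝ) {d : ℝ} (rest : List Block) (hd : 0 < d) :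
    Speedup1 ⟨⟨Q, a, b⟩ :: rest, d⟩
      ⟨⟨!Q, 0, b⟩ :: ⟨Q, max a (d / 2), max (d / 2) b⟩ :: rest, max (d / 2) 1⟩ := by
  simpa only [sub_half] using Speedup1.intro Q a b d (d / 2) rest (half_pos hd) (half_lt_self hd)

/-- The exponent `x` of the outermost guess in the eight-line proof for `c`. It is at least
`c² / 2`, so that splitting `DTS[n^{c²}]` in half costs no more than `n^x`, and at least `1`, below
which the input exponent `max x 1` would not shrink any further. -/
noncomputable def guessExponent (c : ℝ) : ℝ := max (c ^ 2 / 2) 1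

theorem one_le_guessExponent (c : ℝ) : 1 ≤ guessExponent c := le_max_right _ _

theorem guessExponent_le_self {c : ℝ} (h₁ : 1 ≤ c) (h₂ : c ≤ 2) : guessExponent c ≤ c :=
  max_le (by nlinarith) h₁

theorem sq_mul_guessExponent_le {c : ℝ} (h : c ^ 4 ≤ c ^ 2 + 4) :
    c ^ 2 * guessExponent c ≤ guessExponent c + 2 := by
  obtain hx | hx : guessExponent c = c ^ 2 / 2 ∨ guessExponent c = 1 := max_choice _ _
  · rw [hx]
    linarith
  · rw [hx]
    nlinarith

theorem pow_four_le_of_le_sqrt {c : ℝ} (hc₀ : 0 ≤ c) (hc : c ≤ √((1 + √17) / 2)) :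
    c ^ 4 ≤ c ^ 2 + 4 := by
  have hsq : c ^ 2 ≤ (1 + √17) / 2 := (Real.le_sqrt hc₀ (by positivity)).1 hc
  have h17 : √17 ^ 2 = 17 := Real.sq_sqrt (by norm_num)
  have h1 : 1 ≤ √17 := Real.one_le_sqrt.2 (by norm_num)
  have hfactor : (c ^ 2 - (1 + √17) / 2) * (c ^ 2 - (1 - √17) / 2) ≤ 0 :=
    mul_nonpos_of_nonpos_of_nonneg (by linarith) (by linarith [sq_nonneg c])
  linarith

/-- The lines of the eight-line proof for `c` strictly between its first and its last one. -/
noncomputable def innerLines (c : ℝ) : List Line :=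
  let x := guessExponent c
  [⟨[⟨false, 0, 1⟩, ⟨true, x, x⟩], 2⟩,
    ⟨[⟨true, 0, 1⟩, ⟨false, 1, 1⟩, ⟨true, x, x⟩], 1⟩,
    ⟨[⟨false, 1, 1⟩, ⟨true, x, x⟩], c⟩,
    ⟨[⟨true, x, x⟩], c ^ 2⟩,
    ⟨[⟨false, 0, x⟩, ⟨true, x, x⟩], x⟩,
    ⟨[⟨true, x, x⟩], c * x⟩]

/-- The alternation-trading proof for `c` of shape `[1,1,0,0,1,0,0]`. -/
noncomputable def eightLineProof (c : ℝ) : List Line :=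
  ⟨[], guessExponent c + 2⟩ :: (innerLines c ++ [⟨[], c ^ 2 * guessExponent c⟩])

theorem hasAnnotation_eightLineProof {c : ℝ} (h₁ : 1 ≤ c) (h₂ : c ≤ 2) :
    HasAnnotation c (eightLineProof c) [true, true, false, false, true, false, false] := by
  set x := guessExponent c
  have hx₁ : 1 ≤ x := one_le_guessExponent c
  have hx₀ : 0 ≤ x := zero_le_one.trans hx₁
  have hxc : x ≤ c := guessExponent_le_self h₁ h₂
  have hcx : x ≤ c * x := le_mul_of_one_le_left hx₀ h₁
  have hguess : SpeedupStep ⟨[], x + 2⟩ ⟨[⟨false, 0, 1⟩, ⟨true, x, x⟩], 2⟩ :=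
    .inl (by simpa using Speedup0.of_one_le true (a := x + 2) hx₁ (by linarith))
  have hsplit_two : SpeedupStep ⟨[⟨false, 0, 1⟩, ⟨true, x, x⟩], 2⟩
      ⟨[⟨true, 0, 1⟩, ⟨false, 1, 1⟩, ⟨true, x, x⟩], 1⟩ :=
    .inr (.inl (by simpa using Speedup1.half false 0 1 [⟨true, x, x⟩] two_pos))
  have hto_c : Slowdown c ⟨[⟨true, 0, 1⟩, ⟨false, 1, 1⟩, ⟨true, x, x⟩], 1⟩
      ⟨[⟨false, 1, 1⟩, ⟨true, x, x⟩], c⟩ := by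
    simpa using Slowdown.of_le_dts c (Q := true) zero_le_one le_rfl le_rfl
  have hto_sq : Slowdown c ⟨[⟨false, 1, 1⟩, ⟨true, x, x⟩], c⟩ ⟨[⟨true, x, x⟩], c ^ 2⟩ := by
    simpa [sq] using Slowdown.of_le_dts c (Q := false) (rest := [⟨true, x, x⟩]) h₁ h₁ hxc
  have hsplit_sq : SpeedupStep ⟨[⟨true, x, x⟩], c ^ 2⟩ ⟨[⟨false, 0, x⟩, ⟨true, x, x⟩], x⟩ := by
    have hhalf : c ^ 2 / 2 ≤ x := le_max_left _ _
    have h := Speedup1.half true x x [] (pow_pos (zero_lt_one.trans_le h₁) 2)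
    rw [max_eq_left hhalf, max_eq_right hhalf] at h
    exact .inr (.inl h)
  have hto_mul : Slowdown c ⟨[⟨false, 0, x⟩, ⟨true, x, x⟩], x⟩ ⟨[⟨true, x, x⟩], c * x⟩ :=
    .of_le_dts c hx₀ le_rfl le_rfl
  have hto_last : Slowdown c ⟨[⟨true, x, x⟩], c * x⟩ ⟨[], c ^ 2 * x⟩ := by
    simpa [sq, mul_assoc] using
      Slowdown.of_le_dts c (Q := true) (rest := []) hcx hcx (hx₁.trans hcx)
  simp only [eightLineProof, innerLines, List.cons_append, List.nil_append,
    HasAnnotation.cons_cons_iff]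
  exact ⟨hguess, hsplit_two, hto_c, hto_sq, hsplit_sq, hto_mul, hto_last, .singleton c _⟩

theorem isNormalForm_eightLineProof {c : ℝ} (h : c ^ 4 ≤ c ^ 2 + 4) :
    IsNormalForm (eightLineProof c) :=
  isNormalForm_cons_append (sq_mul_guessExponent_le h) (by simp [innerLines])

theorem statement1_general (c : ℝ) (hc1 : 1 ≤ c) (hc2 : c ≤ √((1 + √17) / 2)) :
    ∃ P : List Line, IsATProof c P ∧ IsNormalForm P ∧ P.length = 8 ∧
      HasAnnotation c P [true, true, false, false, true, false, false] := by
  have hquartic : c ^ 4 ≤ c ^ 2 + 4 := pow_four_le_of_le_sqrt (zero_le_one.trans hc1) hc2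
  have hc_le_two : c ≤ 2 := by nlinarith [sq_nonneg (c ^ 2 - 4)]
  have hannot := hasAnnotation_eightLineProof hc1 hc_le_two
  have hfirst : Line.WF ⟨[], guessExponent c + 2⟩ :=
    Line.wf_nil.2 (by linarith [one_le_guessExponent c])
  exact ⟨eightLineProof c, hannot.isATProof hc1 hfirst, isNormalForm_eightLineProof hquartic,
    rfl, hannot⟩

/-- for every real `√2 ≤ c ≤ √((1+√17)/2)` there is a normal form
alternation-trading proof for `c` with exactly 8 lines and annotation `[1,1,0,0,1,0,0]`. -/
theorem statement1 (c : ℝ) (hc1 : Real.sqrt 2 ≤ c)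
    (hc2 : c ≤ Real.sqrt ((1 + Real.sqrt 17) / 2)) :
    ∃ P : List Line, IsATProof c P ∧ IsNormalForm P ∧ P.length = 8 ∧
      HasAnnotation c P [true, true, false, false, true, false, false] := by
  exact statement1_general c ((Real.one_le_sqrt.2 one_le_two).trans hc1) hc2
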